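/- If n - 2k + 3 ≥ 0, then the function x ↦ (x^n - x^k)/(x^n - 1) is concave on (1, ∞), for integers 1 ≤ k < n. -/

import Mathlib

lemma aux_pow (k : ℕ) {x : ℝ} (hx : 1 < x) :
    HasDerivAt (fun y : ℝ => y ^ k) (k * x ^ k / x) x := by
  have h0 : x ≠ 0 := by linarith
  refine (hasDerivAt_pow k x).congr_deriv ?_
  cases k with
  | zero => simp
  | succ a => simp only [Nat.add_sub_cancel]; field_simp; ring

lemma aux_mono (g g' : ℝ → ℝ) (hc : Continuous g) (h1 : g 1 = 0)
    (hd : ∀ x, 1 < x → HasDerivAt g (g' x) x) (hp : ∀ x, 1 < x → 0 ≤ g' x) :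
    ∀ x, 1 < x → 0 ≤ g x := by
  intro x hx
  have hm : MonotoneOn g (Set.Ici 1) := by
    apply monotoneOn_of_hasDerivWithinAt_nonneg (f' := g') (convex_Ici 1) hc.continuousOn
    · intro y hy
      rw [interior_Ici] at hy
      exact (hd y hy).hasDerivWithinAt
    · intro y hy
      rw [interior_Ici] at hy
      exact hp y hy
  rw [← h1]
  exact hm (Set.mem_Ici.2 le_rfl) (Set.mem_Ici.2 hx.le) hx.le

lemma aux_H2 (k m : ℕ) (h : (k : ℝ) ≤ m + 3) : ∀ x : ℝ, 1 < x →
    0 ≤ 2 * m * (m + 1) * (m + 2 * k) * (x ^ k * x ^ m)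
      + ((m + k) * (m + k - 1) + 2 * k * (m + k) - 2 * k * (k - 1)) * k
      - (m + k) * (2 * m + k) * (m + k + 1) * x ^ m := by
  apply aux_mono _ (fun x => m * (m + k) * x ^ m / x *
    (2 * (m + 1) * (m + 2 * k) * x ^ k - (2 * m + k) * (m + k + 1)))
  · fun_prop
  · simp only [one_pow]; ring
  · intro x hx
    have := (((((aux_pow k hx).mul (aux_pow m hx)).const_mul
      (2 * (m : ℝ) * (m + 1) * (m + 2 * k))).add_const
      (((m + k) * (m + k - 1) + 2 * k * (m + k) - 2 * k * (k - 1)) * (k : ℝ))).sub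
      ((aux_pow m hx).const_mul ((m + k) * (2 * m + k) * (m + k + 1 : ℝ))))
    refine HasDerivAt.congr_deriv this ?_
    have h0 : x ≠ 0 := by linarith
    field_simp
    ring
  · intro x hx
    have hx0 : 0 < x := by linarith
    have h1 : 1 ≤ x ^ k := one_le_pow₀ hx.le
    have h2 : 0 ≤ (k : ℝ) * (m + 3 - k) := mul_nonneg (by positivity) (by linarith)
    have h3 : 0 ≤ 2 * ((m : ℝ) + 1) * (m + 2 * k) * (x ^ k - 1) :=
      mul_nonneg (by positivity) (by linarith)
    apply mul_nonneg (by positivity)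
    nlinarith

lemma aux_H1 (k m : ℕ) (h : (k : ℝ) ≤ m + 3) : ∀ x : ℝ, 1 < x →
    0 ≤ 2 * m * (m + 1) * (x ^ k * (x ^ k * x ^ m))
      + ((m + k) * (m + k - 1) + 2 * k * (m + k) - 2 * k * (k - 1)) * x ^ k
      - (2 * m + k) * (m + k + 1) * (x ^ k * x ^ m) - m * (m + k - 1) := by
  apply aux_mono _ (fun x => x ^ k / x * (2 * m * (m + 1) * (m + 2 * k) * (x ^ k * x ^ m)
      + ((m + k) * (m + k - 1) + 2 * k * (m + k) - 2 * k * (k - 1)) * k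
      - (m + k) * (2 * m + k) * (m + k + 1) * x ^ m))
  · fun_prop
  · simp only [one_pow]; ring
  · intro x hx
    have hn := (aux_pow k hx).mul (aux_pow m hx)
    have := ((((((aux_pow k hx).mul hn).const_mul
      (2 * (m : ℝ) * (m + 1))).add ((aux_pow k hx).const_mul
      ((m + k) * (m + k - 1) + 2 * k * (m + k) - 2 * k * (k - 1) : ℝ))).sub
      (hn.const_mul ((2 * m + k) * (m + k + 1 : ℝ)))).sub_const (m * (m + k - 1) : ℝ))
    refine HasDerivAt.congr_deriv this ?_
    have h0 : x ≠ 0 := by linarith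
    simp only [Pi.mul_apply]
    field_simp
    ring
  · intro x hx
    have hx0 : 0 < x := by linarith
    exact mul_nonneg (by positivity) (aux_H2 k m h x hx)

lemma aux_F (k m : ℕ) (h : (k : ℝ) ≤ m + 3) : ∀ x : ℝ, 1 < x →
    0 ≤ m * (m + 1) * ((x ^ k * x ^ m) * (x ^ k * x ^ m))
      + ((m + k) * (m + k - 1) + 2 * k * (m + k) - 2 * k * (k - 1)) * (x ^ k * x ^ m)
      - (m + k) * (m + k + 1) * (x ^ k * x ^ m * x ^ m) - (m + k) * (m + k - 1) * x ^ m
      + k * (k - 1) := by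
  apply aux_mono _ (fun x => (m + k) * x ^ m / x * (
      2 * m * (m + 1) * (x ^ k * (x ^ k * x ^ m))
      + ((m + k) * (m + k - 1) + 2 * k * (m + k) - 2 * k * (k - 1)) * x ^ k
      - (2 * m + k) * (m + k + 1) * (x ^ k * x ^ m) - m * (m + k - 1)))
  · fun_prop
  · simp only [one_pow]; ring
  · intro x hx
    have hn := (aux_pow k hx).mul (aux_pow m hx)
    have := (((((hn.mul hn).const_mul (m * (m + 1) : ℝ)).add (hn.const_mul
      ((m + k) * (m + k - 1) + 2 * k * (m + k) - 2 * k * (k - 1) : ℝ))).sub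
      ((hn.mul (aux_pow m hx)).const_mul ((m + k) * (m + k + 1 : ℝ)))).sub
      ((aux_pow m hx).const_mul ((m + k) * (m + k - 1) : ℝ))).add_const (k * (k - 1) : ℝ)
    refine HasDerivAt.congr_deriv this ?_
    have h0 : x ≠ 0 := by linarith
    simp only [Pi.mul_apply]
    field_simp
    ring
  · intro x hx
    have hx0 : 0 < x := by linarith
    exact mul_nonneg (by positivity) (aux_H1 k m h x hx)

theorem stmt_16 (n k : ℕ) (hk : 1 ≤ k) (hkn : k < n)
    (h : (n : ℝ) - 2 * k + 3 ≥ 0) :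
    ConcaveOn ℝ (Set.Ioi 1) (fun x : ℝ => (x ^ n - x ^ k) / (x ^ n - 1)) := by
  obtain ⟨m, rfl⟩ := Nat.exists_eq_add_of_lt hkn
  have hk3 : (k : ℝ) ≤ (m + 1 : ℕ) + 3 := by push_cast at h ⊢; linarith
  have hF := aux_F k (m + 1) hk3
  rw [add_assoc]
  generalize m + 1 = m at *
  have hv : ∀ x : ℝ, 1 < x → 0 < x ^ (k + m) - 1 := fun x hx =>
    sub_pos.2 (one_lt_pow₀ hx (by omega))
  have hd1 : ∀ x : ℝ, 1 < x → HasDerivAt (fun x : ℝ => (x ^ (k + m) - x ^ k) / (x ^ (k + m) - 1))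
      ((((k + m : ℕ) * x ^ (k + m) / x - k * x ^ k / x) * (x ^ (k + m) - 1)
        - (x ^ (k + m) - x ^ k) * ((k + m : ℕ) * x ^ (k + m) / x)) / (x ^ (k + m) - 1) ^ 2) x := by
    intro x hx
    exact ((aux_pow (k + m) hx).sub (aux_pow k hx)).div ((aux_pow (k + m) hx).sub_const 1)
      (hv x hx).ne'
  have hd2 : ∀ x : ℝ, 1 < x → HasDerivAt (fun x : ℝ =>
      ((((k + m : ℕ) * x ^ (k + m) / x - k * x ^ k / x) * (x ^ (k + m) - 1)
        - (x ^ (k + m) - x ^ k) * ((k + m : ℕ) * x ^ (k + m) / x)) / (x ^ (k + m) - 1) ^ 2))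
      (-(x ^ k / x ^ 2 / (x ^ (k + m) - 1) ^ 3 *
        (m * (m + 1) * ((x ^ k * x ^ m) * (x ^ k * x ^ m))
      + ((m + k) * (m + k - 1) + 2 * k * (m + k) - 2 * k * (k - 1)) * (x ^ k * x ^ m)
      - (m + k) * (m + k + 1) * (x ^ k * x ^ m * x ^ m) - (m + k) * (m + k - 1) * x ^ m
      + k * (k - 1)))) x := by
    intro x hx
    have h0 : x ≠ 0 := by linarith
    have hw := (hv x hx).ne'
    have hn := aux_pow (k + m) hx
    have hp := aux_pow k hx
    have hn' := (hn.const_mul ((k + m : ℕ) : ℝ)).div (hasDerivAt_id x) h0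
    have hp' := (hp.const_mul (k : ℝ)).div (hasDerivAt_id x) h0
    have hD := (((hn'.sub hp').mul (hn.sub_const 1)).sub ((hn.sub hp).mul hn')).div
      ((hn.sub_const 1).pow 2) (pow_ne_zero 2 hw)
    refine HasDerivAt.congr_deriv hD ?_
    simp only [Pi.mul_apply, Pi.sub_apply, Pi.div_apply, Pi.pow_apply, id, Nat.cast_add]
    rw [pow_add] at hw ⊢
    generalize x ^ k = P at *
    generalize x ^ m = Q at *
    field_simp
    ring
  refine concaveOn_of_hasDerivWithinAt2_nonpos (convex_Ioi 1) (f' := _) (f'' := _)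
    (fun x hx => (hd1 x hx).continuousAt.continuousWithinAt)
    (fun x hx => (hd1 x (by simpa using hx)).hasDerivWithinAt)
    (fun x hx => (hd2 x (by simpa using hx)).hasDerivWithinAt) ?_
  intro x hx
  rw [interior_Ioi] at hx
  have hx1 : 1 < x := hx
  have hx0 : 0 < x := by linarith
  have := hv x hx1
  exact neg_nonpos.2 (mul_nonneg (by positivity) (hF x hx1))
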